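/- Every mechanism on tie-free profiles that is ordinal, neutral, anonymous and truthful is a convex combination of the mechanisms J^{1,q}_U for q ∈ {1,...,m} together with the mechanisms J^{2,q}_U for q ∈ {⌊n/2⌋+1,...,n+1}. -/

import Mathlib

open Finset

/-- A normalized preference function: maps into `[0,1]` and attains both `0` and `1`. -/
def IsPref {m : ℕ} (u : Fin m → ℝ) : Prop :=
  (∀ j, 0 ≤ u j ∧ u j ≤ 1) ∧ (∃ j, u j = 0) ∧ (∃ j, u j = 1)

/-- A tie-free normalized preference function. -/
def IsPrefU {m : ℕ} (u : Fin m → ℝ) : Prop :=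
  IsPref u ∧ Function.Injective u

/-- A profile of normalized preference functions. -/
def IsProfile {n m : ℕ} (u : Fin n → Fin m → ℝ) : Prop :=
  ∀ i, IsPref (u i)

/-- A tie-free profile. -/
def IsProfileU {n m : ℕ} (u : Fin n → Fin m → ℝ) : Prop :=
  ∀ i, IsPrefU (u i)

/-- `p` is a probability distribution over the `m` candidates. -/
def IsDist {m : ℕ} (p : Fin m → ℝ) : Prop :=
  (∀ j, 0 ≤ p j) ∧ ∑ j, p j = 1

/-- Social welfare of candidate `j` under profile `u`. -/
def Wel {n m : ℕ} (j : Fin m) (u : Fin n → Fin m → ℝ) : ℝ :=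
  ∑ i, u i j

/-- Range voting: the candidate of maximal social welfare, ties broken
toward the smaller index. -/
noncomputable def RV {n m : ℕ} (hm : 0 < m) (u : Fin n → Fin m → ℝ) : Fin m :=
  (Finset.univ.filter fun j => ∀ j', Wel j' u ≤ Wel j u).min' (by
    obtain ⟨j, -, hj⟩ := Finset.exists_max_image (Finset.univ : Finset (Fin m))
      (fun j => Wel j u) ⟨⟨0, hm⟩, Finset.mem_univ _⟩
    exact ⟨j, Finset.mem_filter.2 ⟨Finset.mem_univ _, fun j' => hj j' (Finset.mem_univ _)⟩⟩)

/-- Expected social welfare of a randomized mechanism `J` (given as the map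
sending a profile to the probability of each candidate winning). -/
noncomputable def expWel {n m : ℕ} (J : (Fin n → Fin m → ℝ) → Fin m → ℝ)
    (u : Fin n → Fin m → ℝ) : ℝ :=
  ∑ j, J u j * Wel j u

/-- Rank of candidate `j` in preference `v`, ties broken in favor of the
smaller candidate index (the most preferred candidate has rank 1). -/
noncomputable def rnk {m : ℕ} (v : Fin m → ℝ) (j : Fin m) : ℕ :=
  (Finset.univ.filter fun j' => v j < v j' ∨ (v j' = v j ∧ j' ≤ j)).card

/-- The mechanism `J^{1,q}`: pick a voter uniformly at random, then a winner
uniformly at random among that voter's `q` most preferred candidates. -/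
noncomputable def Jone (q : ℕ) {n m : ℕ} (u : Fin n → Fin m → ℝ) : Fin m → ℝ :=
  fun j => (∑ i : Fin n, if rnk (u i) j ≤ q then ((q : ℝ))⁻¹ else 0) / (n : ℝ)

/-- `⌊m^{1/3}⌋`. -/
noncomputable def mroot3 (m : ℕ) : ℕ := ⌊(m : ℝ) ^ ((1 : ℝ)/3)⌋₊

/-- The mechanism `J*`, running `J^{1,1}` and `J^{1,⌊m^{1/3}⌋}` each with
probability `1/2`. -/
noncomputable def Jstar {n m : ℕ} (u : Fin n → Fin m → ℝ) : Fin m → ℝ :=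
  fun j => (Jone 1 u j + Jone (mroot3 m) u j) / 2

/-- Voter with preference `v` prefers `j₀` to `j₁` (ties toward the smaller
candidate index). -/
def Prefers {m : ℕ} (v : Fin m → ℝ) (j₀ j₁ : Fin m) : Prop :=
  v j₁ < v j₀ ∨ (v j₀ = v j₁ ∧ j₀ < j₁)

noncomputable instance {m : ℕ} (v : Fin m → ℝ) (j₀ j₁ : Fin m) :
    Decidable (Prefers v j₀ j₁) := by unfold Prefers; infer_instance

/-- The mechanism `J^{2,q}`: pick two distinct candidates uniformly at random,
let each voter vote for the one it prefers; if one of the two gets at least `q`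
votes it wins, otherwise the winner is one of the two by a fair coin. -/
noncomputable def Jtwo (q : ℕ) {n m : ℕ} (u : Fin n → Fin m → ℝ) : Fin m → ℝ :=
  fun j =>
    (∑ j₀ : Fin m, ∑ j₁ : Fin m,
      if j₀ = j₁ then 0
      else
        if q ≤ (Finset.univ.filter fun i => Prefers (u i) j₀ j₁).card then
          (if j = j₀ then (1 : ℝ) else 0)
        else if q ≤ n - (Finset.univ.filter fun i => Prefers (u i) j₀ j₁).card then
          (if j = j₁ then (1 : ℝ) else 0)
        else ((if j = j₀ then (1 : ℝ)/2 else 0) + (if j = j₁ then (1 : ℝ)/2 else 0)))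
      / ((m * (m - 1) : ℕ) : ℝ)

/-- `J` assigns a probability distribution to every tie-free profile. -/
def MechU {n m : ℕ} (J : (Fin n → Fin m → ℝ) → Fin m → ℝ) : Prop :=
  ∀ u, IsProfileU u → IsDist (J u)

/-- Truthfulness (on tie-free profiles). -/
def Truthful {n m : ℕ} (J : (Fin n → Fin m → ℝ) → Fin m → ℝ) : Prop :=
  ∀ u, IsProfileU u → ∀ (i : Fin n) (v : Fin m → ℝ), IsPrefU v →
    ∑ j, J (Function.update u i v) j * u i j ≤ ∑ j, J u j * u i j

/-- Ordinality (on tie-free profiles). -/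
def OrdinalMech {n m : ℕ} (J : (Fin n → Fin m → ℝ) → Fin m → ℝ) : Prop :=
  ∀ u u' : Fin n → Fin m → ℝ, IsProfileU u → IsProfileU u' →
    (∀ i (j j' : Fin m), u i j < u i j' ↔ u' i j < u' i j') → J u = J u'

/-- Unilateral mechanism (on tie-free profiles): depends only on one voter. -/
def Unilateral {n m : ℕ} (J : (Fin n → Fin m → ℝ) → Fin m → ℝ) : Prop :=
  ∃ i : Fin n, ∀ u u' : Fin n → Fin m → ℝ, IsProfileU u → IsProfileU u' →
    u i = u' i → J u = J u'

/-- Duple mechanism (on tie-free profiles): supported on two fixed candidates. -/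
def Duple {n m : ℕ} (J : (Fin n → Fin m → ℝ) → Fin m → ℝ) : Prop :=
  ∃ j₀ j₁ : Fin m, j₀ ≠ j₁ ∧ ∀ u, IsProfileU u → ∀ j, j ≠ j₀ → j ≠ j₁ → J u j = 0

/-- Neutral mechanism (on tie-free profiles). -/
def Neutral {n m : ℕ} (J : (Fin n → Fin m → ℝ) → Fin m → ℝ) : Prop :=
  ∀ τ : Equiv.Perm (Fin m), ∀ u : Fin n → Fin m → ℝ, IsProfileU u →
    ∀ j, J (fun i => u i ∘ τ) j = J u (τ j)

/-- Anonymous mechanism (on tie-free profiles). -/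
def AnonymousMech {n m : ℕ} (J : (Fin n → Fin m → ℝ) → Fin m → ℝ) : Prop :=
  ∀ σ : Equiv.Perm (Fin n), ∀ u : Fin n → Fin m → ℝ, IsProfileU u →
    J (fun i => u (σ i)) = J u

/-- `ratio_U(J)`: infimum of the welfare ratio over tie-free profiles. -/
noncomputable def ratioU {n m : ℕ} (hm : 0 < m)
    (J : (Fin n → Fin m → ℝ) → Fin m → ℝ) : ℝ :=
  sInf {r | ∃ u, IsProfileU u ∧ r = expWel J u / Wel (RV hm u) u}

/-- `R_k`: tie-free normalized preferences taking values in `{0,1/k,…,1}`. -/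
def Rk {m : ℕ} (k : ℕ) (u : Fin m → ℝ) : Prop :=
  IsPrefU u ∧ ∀ j, ∃ t : ℕ, t ≤ k ∧ u j = (t : ℝ) / k

/-- `a(u)`: the number of `t ∈ {0,…,k-1}` such that exactly one of `t/k` and
`(t+1)/k` lies in the image of `u`. -/
noncomputable def aOf {m : ℕ} (k : ℕ) (u : Fin m → ℝ) : ℕ :=
  ((Finset.range k).filter fun t : ℕ =>
    ((∃ j : Fin m, u j = (t : ℝ) / k) ∧ ¬ (∃ j : Fin m, u j = ((t : ℝ) + 1) / k)) ∨
    ((∃ j : Fin m, u j = ((t : ℝ) + 1) / k) ∧ ¬ (∃ j : Fin m, u j = (t : ℝ) / k))).card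

/-- `C_k = {u ∈ R_k : a(u) = 2}`. -/
def Ck {m : ℕ} (k : ℕ) (u : Fin m → ℝ) : Prop :=
  Rk k u ∧ aOf k u = 2

/-- `count(u)`: the number of candidates with `u`-value above `1/2`. -/
noncomputable def countOf {m : ℕ} (u : Fin m → ℝ) : ℕ :=
  (Finset.univ.filter fun j => (1 : ℝ)/2 < u j).card

/-- `rank(u,j) = #{j' : u(j') ≥ u(j)}`. -/
noncomputable def rankOf {m : ℕ} (u : Fin m → ℝ) (j : Fin m) : ℕ :=
  (Finset.univ.filter fun j' => u j ≤ u j').card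

/-- `D_k = D_k^{(a)} ∪ D_k^{(b)} ∪ D_k^{(c)}` (`⟨0,hm⟩` is the first candidate). -/
def Dk {m : ℕ} (hm : 0 < m) (k : ℕ) (u : Fin m → ℝ) : Prop :=
  Ck k u ∧
    ((countOf u ≤ 2 ∧ (1 : ℝ)/2 < u ⟨0, hm⟩) ∨
     (countOf u = 1 ∧ mroot3 m < rankOf u ⟨0, hm⟩) ∨
     (countOf u = mroot3 m + 1 ∧ rankOf u ⟨0, hm⟩ = mroot3 m + 1))

/-- `g(u) = E[Wel(J*(u),u)] / Wel(1,u)` where `1` is the first candidate. -/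
noncomputable def gfun {n m : ℕ} (hm : 0 < m) (u : Fin n → Fin m → ℝ) : ℝ :=
  expWel Jstar u / Wel ⟨0, hm⟩ u

/-- The minimum (as an infimum) of `f` over profiles all of whose preference
functions satisfy `P`. -/
noncomputable def minOver {n m : ℕ} (P : (Fin m → ℝ) → Prop)
    (f : (Fin n → Fin m → ℝ) → ℝ) : ℝ :=
  sInf {r | ∃ u : Fin n → Fin m → ℝ, (∀ i, P (u i)) ∧ r = f u}


abbrev Rkg (M : ℕ) := Equiv.Perm (Fin (M + 2))

/-- swap the candidates at positions `r`, `r+1`. -/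
def adj {M : ℕ} (r : Fin (M + 1)) (ρ : Rkg M) : Rkg M := Equiv.swap r.castSucc r.succ * ρ

lemma adj_apply_lo {M : ℕ} (r : Fin (M + 1)) (ρ : Rkg M) (x : Fin (M + 2))
    (h : ρ x = r.castSucc) : adj r ρ x = r.succ := by
  simp [adj, h]

lemma adj_apply_hi {M : ℕ} (r : Fin (M + 1)) (ρ : Rkg M) (x : Fin (M + 2))
    (h : ρ x = r.succ) : adj r ρ x = r.castSucc := by
  simp [adj, h]

lemma adj_apply_ne {M : ℕ} (r : Fin (M + 1)) (ρ : Rkg M) (x : Fin (M + 2))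
    (h : ρ x ≠ r.castSucc) (h' : ρ x ≠ r.succ) : adj r ρ x = ρ x := by
  simp [adj, Equiv.swap_apply_of_ne_of_ne h h']

lemma adj_adj {M : ℕ} (r : Fin (M + 1)) (ρ : Rkg M) : adj r (adj r ρ) = ρ := by
  simp [adj, ← mul_assoc]

/-- relative order of a pair that is not swapped stays the same. -/
lemma adj_lt_iff {M : ℕ} (r : Fin (M + 1)) (ρ : Rkg M) (x y : Fin (M + 2))
    (h1 : ¬ (ρ x = r.castSucc ∧ ρ y = r.succ)) (h2 : ¬ (ρ y = r.castSucc ∧ ρ x = r.succ)) :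
    adj r ρ x < adj r ρ y ↔ ρ x < ρ y := by
  unfold adj
  simp only [Equiv.Perm.mul_apply, Equiv.swap_apply_def]
  generalize ρ x = a at *
  generalize ρ y = b at *
  simp only [Fin.ext_iff, Fin.lt_def, Fin.val_castSucc, Fin.val_succ] at *
  split_ifs <;> simp at * <;> omega

lemma exists_inv {M : ℕ} (ρ ρ' : Rkg M) (h : ρ ≠ ρ') :
    ∃ r : Fin (M + 1), ρ' (ρ.symm r.succ) < ρ' (ρ.symm r.castSucc) := by
  by_contra hc
  push Not at hc
  apply h
  have hs : StrictMono (fun k => ρ' (ρ.symm k)) := by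
    rw [Fin.strictMono_iff_lt_succ]
    intro r
    refine lt_of_le_of_ne (hc r) ?_
    simp [Fin.ext_iff]
  have hid : ((StrictMono.orderIsoOfSurjective (fun k => ρ' (ρ.symm k)) hs
      ((ρ.symm.trans ρ').surjective))) = OrderIso.refl _ := Subsingleton.elim _ _
  ext x
  have := congrArg (fun e => e (ρ x)) hid
  have this : ρ' (ρ.symm (ρ x)) = ρ x := this
  rw [Equiv.symm_apply_apply] at this
  rw [this]

lemma conn {M : ℕ} {β : Type*} (ρ' : Rkg M) (I : Rkg M → Prop) (Φ : Rkg M → β)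
    (hstep : ∀ ρ r, I ρ → ρ' (ρ.symm r.succ) < ρ' (ρ.symm r.castSucc) →
      I (adj r ρ) ∧ Φ (adj r ρ) = Φ ρ) (ρ : Rkg M) (hρ : I ρ) : Φ ρ = Φ ρ' := by
  have key : ∀ K : ℕ, ∀ ρ : Rkg M, I ρ →
      ∑ j, ((ρ j : ℕ) - (ρ' j : ℕ) : ℤ) ^ 2 ≤ (K : ℤ) → Φ ρ = Φ ρ' := by
    intro K
    induction K with
    | zero =>
      intro ρ _ hK
      have h0 : ∑ j, ((ρ j : ℕ) - (ρ' j : ℕ) : ℤ) ^ 2 = 0 :=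
        le_antisymm hK (Finset.sum_nonneg fun _ _ => sq_nonneg _)
      rw [Finset.sum_eq_zero_iff_of_nonneg (fun _ _ => sq_nonneg _)] at h0
      congr 1
      ext j
      have := h0 j (mem_univ _)
      have := pow_eq_zero_iff (two_ne_zero) |>.1 this
      omega
    | succ K ih =>
      intro ρ hI hK
      by_cases he : ρ = ρ'
      · rw [he]
      obtain ⟨r, hr⟩ := exists_inv ρ ρ' he
      obtain ⟨h1, h2⟩ := hstep ρ r hI hr
      rw [← h2]
      apply ih _ h1
      set a := ρ.symm r.castSucc with ha
      set b := ρ.symm r.succ with hb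
      have hab : a ≠ b := by
        intro h
        have := ρ.symm.injective h
        simp [Fin.ext_iff] at this
      have hρa : ρ a = r.castSucc := by simp [ha]
      have hρb : ρ b = r.succ := by simp [hb]
      have hsplit : ∀ f : Fin (M + 2) → ℤ,
          ∑ j, f j = f a + f b + ∑ j ∈ ({a, b} : Finset _)ᶜ, f j := by
        intro f
        rw [← Finset.sum_add_sum_compl ({a, b} : Finset _), Finset.sum_pair hab]
      rw [hsplit] at hK ⊢
      have hrest : ∑ j ∈ ({a, b} : Finset _)ᶜ, ((adj r ρ j : ℕ) - (ρ' j : ℕ) : ℤ) ^ 2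
          = ∑ j ∈ ({a, b} : Finset _)ᶜ, ((ρ j : ℕ) - (ρ' j : ℕ) : ℤ) ^ 2 := by
        apply Finset.sum_congr rfl
        intro j hj
        simp at hj
        rw [adj_apply_ne]
        · intro h; apply hj.1; rw [ha, ← h]; simp
        · intro h; apply hj.2; rw [hb, ← h]; simp
      rw [hrest, adj_apply_lo r ρ a hρa, adj_apply_hi r ρ b hρb]
      rw [hρa, hρb] at hK
      have hr' : ((ρ' b : ℕ) : ℤ) < ((ρ' a : ℕ) : ℤ) := by exact_mod_cast hr
      simp at hK ⊢
      nlinarith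
  refine key (∑ j, ((ρ j : ℕ) - (ρ' j : ℕ) : ℤ) ^ 2).toNat ρ hρ ?_
  exact Int.self_le_toNat _

abbrev Prof (N M : ℕ) := Fin (N + 1) → Rkg M

def sw {N M : ℕ} (π : Prof N M) (i : Fin (N + 1)) (r : Fin (M + 1)) : Prof N M :=
  Function.update π i (adj r (π i))

lemma sw_same {N M : ℕ} (π : Prof N M) (i : Fin (N + 1)) (r : Fin (M + 1)) :
    sw π i r i = adj r (π i) := by simp [sw]

lemma sw_ne {N M : ℕ} (π : Prof N M) (i l : Fin (N + 1)) (r : Fin (M + 1)) (h : l ≠ i) :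
    sw π i r l = π l := by simp [sw, h]

lemma sw_sw {N M : ℕ} (π : Prof N M) (i : Fin (N + 1)) (r : Fin (M + 1)) :
    sw (sw π i r) i r = π := by
  simp [sw, adj_adj]

lemma sw_comm {N M : ℕ} (π : Prof N M) (i l : Fin (N + 1)) (r s : Fin (M + 1)) (h : l ≠ i) :
    sw (sw π l s) i r = sw (sw π i r) l s := by
  unfold sw
  rw [Function.update_comm h]
  simp [h, h.symm]

/-- The ordinal properties of the mechanism. -/
structure Good {N M : ℕ} (p : Prof N M → Fin (M + 2) → ℝ) : Prop where
  loc : ∀ π i r j, π i j ≠ Fin.castSucc r → π i j ≠ Fin.succ r → p (sw π i r) j = p π j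
  pres : ∀ π i r x y, π i x = Fin.castSucc r → π i y = Fin.succ r →
    p (sw π i r) x + p (sw π i r) y = p π x + p π y
  mono : ∀ π i r x, π i x = Fin.castSucc r → p (sw π i r) x ≤ p π x
  neut : ∀ π (τ : Equiv.Perm (Fin (M + 2))) j, p (fun i => π i * τ) j = p π (τ j)
  anon : ∀ π (σ : Equiv.Perm (Fin (N + 1))), p (fun i => π (σ i)) = p π

variable {N M : ℕ}

/-- change of the probability of `x` -/
def dd (p : Prof N M → Fin (M + 2) → ℝ) (π : Prof N M) (i : Fin (N + 1)) (r : Fin (M + 1))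
    (x : Fin (M + 2)) : ℝ := p π x - p (sw π i r) x

lemma dd_step {p : Prof N M → Fin (M + 2) → ℝ} (hp : Good p) (π : Prof N M) (i l : Fin (N + 1))
    (r s : Fin (M + 1)) (x y : Fin (M + 2)) (hx : π i x = r.castSucc) (hy : π i y = r.succ)
    (hl : l ≠ i)
    (h1 : ¬ (π l x = s.castSucc ∧ π l y = s.succ)) (h2 : ¬ (π l y = s.castSucc ∧ π l x = s.succ)) :
    dd p (sw π l s) i r x = dd p π i r x := by
  have hxy : x ≠ y := by
    rintro rfl
    rw [hx] at hy
    simp [Fin.ext_iff] at hy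
  have e1 := hp.pres π i r x y hx hy
  have e2 := hp.pres (sw π l s) i r x y (by rw [sw_ne _ _ _ _ hl.symm, hx])
    (by rw [sw_ne _ _ _ _ hl.symm, hy])
  have key : ∀ z, π l z ≠ s.castSucc → π l z ≠ s.succ →
      p (sw π l s) z = p π z ∧ p (sw (sw π l s) i r) z = p (sw π i r) z := by
    intro z hz hz'
    refine ⟨hp.loc _ _ _ _ hz hz', ?_⟩
    rw [sw_comm _ _ _ _ _ hl]
    apply hp.loc
    · rwa [sw_ne _ _ _ _ hl]
    · rwa [sw_ne _ _ _ _ hl]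
  unfold dd
  by_cases hX : π l x ≠ s.castSucc ∧ π l x ≠ s.succ
  · obtain ⟨a, b⟩ := key x hX.1 hX.2
    rw [a, b]
  · have hinj : π l x ≠ π l y := fun h => hxy ((π l).injective h)
    have hY : π l y ≠ s.castSucc ∧ π l y ≠ s.succ := by
      constructor
      · intro h; rw [h] at hinj; tauto
      · intro h; rw [h] at hinj; tauto
    obtain ⟨a, b⟩ := key y hY.1 hY.2
    rw [a, b] at e2
    linarith

lemma dd_single {p : Prof N M → Fin (M + 2) → ℝ} (hp : Good p) (π : Prof N M) (i l : Fin (N + 1))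
    (r : Fin (M + 1)) (x y : Fin (M + 2)) (hx : π i x = r.castSucc) (hy : π i y = r.succ)
    (hl : l ≠ i) (ρ' : Rkg M) (h : π l x < π l y ↔ ρ' x < ρ' y) :
    dd p (Function.update π l ρ') i r x = dd p π i r x := by
  have hxy : x ≠ y := by
    rintro rfl
    rw [hx] at hy
    simp [Fin.ext_iff] at hy
  have := conn ρ' (fun ρ => (ρ x < ρ y ↔ ρ' x < ρ' y))
    (fun ρ => dd p (Function.update π l ρ) i r x) ?_ (π l) h
  · rw [← this]; simp
  intro ρ s hI hs
  have g1 : ¬ (ρ x = s.castSucc ∧ ρ y = s.succ) := by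
    rintro ⟨a, b⟩
    rw [← a, ← b] at hs
    simp at hs
    have : ρ x < ρ y := by rw [a, b]; simp
    exact absurd (hI.1 this) (not_lt.2 hs.le)
  have g2 : ¬ (ρ y = s.castSucc ∧ ρ x = s.succ) := by
    rintro ⟨a, b⟩
    rw [← a, ← b] at hs
    simp at hs
    have : ρ y < ρ x := by rw [a, b]; simp
    exact absurd (hI.2 hs) (not_lt.2 this.le)
  refine ⟨?_, ?_⟩
  · rw [adj_lt_iff _ _ _ _ g1 g2]; exact hI
  · have := dd_step hp (Function.update π l ρ) i l r s x y (by simp [hl.symm, hx])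
      (by simp [hl.symm, hy]) hl (by simpa using g1) (by simpa using g2)
    simpa [sw] using this

lemma dd_multi {p : Prof N M → Fin (M + 2) → ℝ} (hp : Good p) (π π' : Prof N M) (i : Fin (N + 1))
    (r : Fin (M + 1)) (x y : Fin (M + 2)) (hx : π i x = r.castSucc) (hy : π i y = r.succ)
    (he : π' i = π i) (h : ∀ l, π l x < π l y ↔ π' l x < π' l y) :
    dd p π' i r x = dd p π i r x := by
  have key : ∀ S : Finset (Fin (N + 1)), dd p (S.piecewise π' π) i r x = dd p π i r x := by
    intro S
    induction S using Finset.induction_on with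
    | empty => simp
    | insert l S hlS ih =>
      rw [Finset.piecewise_insert]
      by_cases hl : l = i
      · subst hl
        rw [← ih]
        congr 1
        rw [Function.update_eq_self_iff]
        simp [hlS, he]
      · rw [dd_single hp _ i l r x y _ _ hl, ih]
        · simp [Finset.piecewise, hlS, h]
        · by_cases hi : i ∈ S <;> simp [Finset.piecewise, hi, he, hx]
        · by_cases hi : i ∈ S <;> simp [Finset.piecewise, hi, he, hy]
  have := key univ
  simpa using this

/-- number of other voters preferring `x` to `y` -/
def cnt (π : Prof N M) (i : Fin (N + 1)) (x y : Fin (M + 2)) : ℕ :=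
  (univ.filter fun l => l ≠ i ∧ π l x < π l y).card

lemma dd_norm {p : Prof N M → Fin (M + 2) → ℝ} (hp : Good p) (π : Prof N M) (i : Fin (N + 1))
    (r : Fin (M + 1)) (x : Fin (M + 2)) (τ : Equiv.Perm (Fin (M + 2))) :
    dd p (fun l => π l * τ) i r x = dd p π i r (τ x) := by
  unfold dd
  rw [hp.neut, ← hp.neut (sw π i r)]
  congr 2
  ext l : 1
  by_cases hl : l = i
  · subst hl; simp [sw, adj, mul_assoc]
  · simp [sw, hl]

lemma dd_anon {p : Prof N M → Fin (M + 2) → ℝ} (hp : Good p) (π : Prof N M) (i : Fin (N + 1))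
    (r : Fin (M + 1)) (x : Fin (M + 2)) (σ : Equiv.Perm (Fin (N + 1))) :
    dd p (fun l => π (σ l)) i r x = dd p π (σ i) r x := by
  unfold dd
  rw [hp.anon, ← hp.anon (sw π (σ i) r) σ]
  congr 2
  ext l : 1
  by_cases hl : l = i
  · subst hl; simp [sw]
  · simp [sw, hl]

lemma exists_perm (i i' : Fin (N + 1)) (P P' : Fin (N + 1) → Prop) [DecidablePred P]
    [DecidablePred P']
    (h : (univ.filter fun l => l ≠ i ∧ P l).card = (univ.filter fun l => l ≠ i' ∧ P' l).card) :
    ∃ σ : Equiv.Perm (Fin (N + 1)), σ i' = i ∧ ∀ l, l ≠ i' → (P (σ l) ↔ P' l) := by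
  classical
  let f : Fin (N + 1) → Fin 3 := fun l => if l = i then 0 else if P l then 1 else 2
  let f' : Fin (N + 1) → Fin 3 := fun l => if l = i' then 0 else if P' l then 1 else 2
  have key : ∀ (i : Fin (N + 1)) (P : Fin (N + 1) → Prop) [DecidablePred P] (c : Fin 3),
      (univ.filter fun l => (if l = i then (0 : Fin 3) else if P l then 1 else 2) = c).card =
      if c = 0 then 1 else if c = 1 then (univ.filter fun l => l ≠ i ∧ P l).card
        else N - (univ.filter fun l => l ≠ i ∧ P l).card := by
    intro i P _ c
    have e0 : (univ.filter fun l => (if l = i then (0 : Fin 3) else if P l then 1 else 2) = 0)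
        = {i} := by
      ext l; simp only [mem_filter, mem_univ, true_and, mem_singleton]; split_ifs <;> simp_all
    have e1 : (univ.filter fun l => (if l = i then (0 : Fin 3) else if P l then 1 else 2) = 1)
        = (univ.filter fun l => l ≠ i ∧ P l) := by
      ext l; simp only [mem_filter, mem_univ, true_and]; split_ifs <;> simp_all
    have e2 : (univ.filter fun l => (if l = i then (0 : Fin 3) else if P l then 1 else 2) = 2)
        = (univ.erase i) \ (univ.filter fun l => l ≠ i ∧ P l) := by
      ext l; simp only [mem_filter, mem_univ, true_and, mem_sdiff, mem_erase]
      split_ifs <;> simp_all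
    have hc : c = 0 ∨ c = 1 ∨ c = 2 := by revert c; decide
    rcases hc with rfl | rfl | rfl
    · rw [e0]; simp
    · rw [e1]; simp
    · rw [e2, Finset.card_sdiff_of_subset]
      · simp
      · intro l; simp +contextual
  have hcard : ∀ c, Nonempty ({l // f' l = c} ≃ {l // f l = c}) := by
    intro c
    apply Fintype.card_eq.1
    rw [Fintype.card_subtype, Fintype.card_subtype, key i P, key i' P', h]
  let e := fun c => (hcard c).some
  let σ := Equiv.ofFiberEquiv e
  have hσ : ∀ l, f (σ l) = f' l := fun l => Equiv.ofFiberEquiv_map e l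
  refine ⟨σ, ?_, ?_⟩
  · have := hσ i'
    simp only [f, f'] at this
    by_contra hne
    rw [if_neg hne] at this
    split_ifs at this <;> simp_all
  · intro l hl
    have := hσ l
    simp only [f, f', if_neg hl] at this
    split_ifs at this <;> simp_all

lemma dd_eq {p : Prof N M → Fin (M + 2) → ℝ} (hp : Good p) (π π' : Prof N M) (i i' : Fin (N + 1))
    (r : Fin (M + 1)) (x y x' y' : Fin (M + 2)) (hx : π i x = r.castSucc) (hy : π i y = r.succ)
    (hx' : π' i' x' = r.castSucc) (hy' : π' i' y' = r.succ)
    (hc : cnt π i x y = cnt π' i' x' y') :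
    dd p π i r x = dd p π' i' r x' := by
  have ex : x = (π i)⁻¹ r.castSucc := by rw [← hx]; simp
  have ey : y = (π i)⁻¹ r.succ := by rw [← hy]; simp
  have ex' : x' = (π' i')⁻¹ r.castSucc := by rw [← hx']; simp
  have ey' : y' = (π' i')⁻¹ r.succ := by rw [← hy']; simp
  obtain ⟨σ, hσ, hσ'⟩ := exists_perm i i' (fun l => π l x < π l y) (fun l => π' l x' < π' l y') hc
  rw [ex, ex', ← dd_norm hp, ← dd_norm hp]
  rw [← hσ, ← dd_anon hp (fun l => π l * (π (σ i'))⁻¹), hσ]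
  symm
  apply dd_multi hp _ _ i' r r.castSucc r.succ
  · simp [hσ]
  · simp [hσ]
  · simp [hσ]
  · intro l
    simp only [Equiv.Perm.mul_apply]
    rw [← ex, ← ey, ← ex', ← ey']
    by_cases hl : l = i'
    · subst hl
      rw [hσ, hx, hy, hx', hy']
    · exact hσ' l hl

lemma exists_D {p : Prof N M → Fin (M + 2) → ℝ} (hp : Good p) :
    ∃ D : Fin (M + 1) → ℕ → ℝ, (∀ r v, 0 ≤ D r v) ∧
      ∀ π i r x y, π i x = Fin.castSucc r → π i y = Fin.succ r →
        p π x - p (sw π i r) x = D r (cnt π i x y) ∧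
        p (sw π i r) y - p π y = D r (cnt π i x y) := by
  classical
  let Q : Fin (M + 1) → ℕ → ℝ → Prop := fun r v t => ∃ π i x y, π i x = Fin.castSucc r ∧
    π i y = Fin.succ r ∧ cnt π i x y = v ∧ t = dd p π i r x
  refine ⟨fun r v => if h : ∃ t, Q r v t then h.choose else 0, ?_, ?_⟩
  · intro r v
    dsimp only
    split_ifs with h
    · obtain ⟨π, i, x, y, h1, h2, h3, h4⟩ := h.choose_spec
      rw [h4]
      unfold dd
      linarith [hp.mono π i r x h1]
    · exact le_rfl
  · intro π i r x y hx hy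
    have h : ∃ t, Q r (cnt π i x y) t := ⟨_, π, i, x, y, hx, hy, rfl, rfl⟩
    have e := hp.pres π i r x y hx hy
    suffices p π x - p (sw π i r) x = h.choose by
      dsimp only
      rw [dif_pos h]
      exact ⟨this, by linarith⟩
    obtain ⟨π', i', x', y', h1, h2, h3, h4⟩ := h.choose_spec
    rw [h4]
    exact dd_eq hp _ _ _ _ r x y x' y' hx hy h1 h2 h3.symm


lemma card_le_val (v : ℕ) (hv : v ≤ N) :
    (univ.filter fun l : Fin (N + 1) => l ≠ 0 ∧ l.val ≤ v).card = v := by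
  have : (univ.filter fun l : Fin (N + 1) => l ≠ 0 ∧ l.val ≤ v).map Fin.valEmbedding
      = Finset.Icc 1 v := by
    ext k
    simp only [mem_map, mem_filter, mem_univ, true_and, Fin.valEmbedding_apply, mem_Icc]
    constructor
    · rintro ⟨l, ⟨h1, h2⟩, rfl⟩
      have : l.val ≠ 0 := fun h => h1 (Fin.ext h)
      omega
    · rintro ⟨h1, h2⟩
      refine ⟨⟨k, by omega⟩, ⟨?_, h2⟩, rfl⟩
      intro h
      have := congrArg Fin.val h
      simp at this
      omega
  rw [← Finset.card_map Fin.valEmbedding, this]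
  simp

def IsD (p : Prof N M → Fin (M + 2) → ℝ) (D : Fin (M + 1) → ℕ → ℝ) : Prop :=
  ∀ π i r x y, π i x = Fin.castSucc r → π i y = Fin.succ r →
        p π x - p (sw π i r) x = D r (cnt π i x y) ∧
        p (sw π i r) y - p π y = D r (cnt π i x y)

lemma cnt_sw (π : Prof N M) (i : Fin (N + 1)) (r : Fin (M + 1)) (x y : Fin (M + 2)) :
    cnt (sw π i r) i x y = cnt π i x y := by
  unfold cnt
  congr 1
  ext l
  simp only [mem_filter, mem_univ, true_and]
  constructor
  · rintro ⟨h, h'⟩; rw [sw_ne _ _ _ _ h] at h'; exact ⟨h, h'⟩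
  · rintro ⟨h, h'⟩; rw [sw_ne _ _ _ _ h]; exact ⟨h, h'⟩

lemma cnt_compl (π : Prof N M) (i : Fin (N + 1)) (x y : Fin (M + 2)) (hxy : x ≠ y) :
    cnt π i x y + cnt π i y x = N := by
  unfold cnt
  rw [← Finset.card_union_of_disjoint]
  · have : (univ.filter fun l => l ≠ i ∧ π l x < π l y) ∪ (univ.filter fun l => l ≠ i ∧ π l y < π l x)
        = univ.erase i := by
      ext l
      simp only [mem_union, mem_filter, mem_univ, true_and, mem_erase, and_true]
      have : π l x ≠ π l y := fun h => hxy ((π l).injective h)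
      have := lt_or_gt_of_ne this
      tauto
    rw [this]; simp
  · rw [Finset.disjoint_filter]
    rintro l - ⟨_, h⟩ ⟨_, h'⟩
    exact lt_asymm h h'

lemma D_symm {p : Prof N M → Fin (M + 2) → ℝ} {D : Fin (M + 1) → ℕ → ℝ} (hD : IsD p D)
    (r : Fin (M + 1)) (v w : ℕ) (hv : v + w = N) : D r v = D r w := by
  classical
  let π : Prof N M := fun l => if l.val ≤ v then 1 else Equiv.swap r.castSucc r.succ
  have hlt : r.castSucc < r.succ := by simp
  have h0x : π 0 r.castSucc = r.castSucc := by simp [π]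
  have h0y : π 0 r.succ = r.succ := by simp [π]
  have hc : cnt π 0 r.castSucc r.succ = v := by
    rw [← card_le_val (N := N) v (by omega)]
    unfold cnt
    congr 1
    ext l
    simp only [mem_filter, mem_univ, true_and, π]
    split_ifs with h
    · simp [h]
    · simp [h, hlt.le]
  have hc' := cnt_compl π 0 _ _ hlt.ne
  have e1 := (hD π 0 r _ _ h0x h0y).1
  have e2 := (hD (sw π 0 r) 0 r r.succ r.castSucc
    (by rw [sw_same]; exact adj_apply_hi _ _ _ h0y) (by rw [sw_same]; exact adj_apply_lo _ _ _ h0x)).2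
  rw [sw_sw, cnt_sw] at e2
  rw [hc] at e1 hc'
  have : cnt π 0 r.succ r.castSucc = w := by omega
  rw [this] at e2
  linarith

lemma hexagon {p : Prof N M → Fin (M + 2) → ℝ} (hp : Good p) {D : Fin (M + 1) → ℕ → ℝ}
    (hD : IsD p D) (r s : Fin (M + 1)) (hrs : r.val + 1 = s.val) (v w : ℕ) (hv : v ≤ N)
    (hw : w ≤ N) : D s v - D s w = D r v - D r w := by
  classical
  have hsr : s.castSucc = r.succ := by ext; simp [hrs]
  set a := r.castSucc with ha
  set x := r.succ with hx
  set y := s.succ with hy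
  have hax : a < x := by simp [ha, hx]
  have hxy : x < y := by rw [← hsr]; simp [hy]
  let π : Prof N M := fun l =>
    if l.val ≤ v then (if l.val ≤ w then 1 else Equiv.swap x y)
    else (if l.val ≤ w then Equiv.swap a x else Equiv.swap a y)
  have hay : a < y := hax.trans hxy
  have s1 : Equiv.swap x y a = a := Equiv.swap_apply_of_ne_of_ne hax.ne hay.ne
  have s2 : Equiv.swap a x y = y := Equiv.swap_apply_of_ne_of_ne hay.ne' hxy.ne'
  have s3 : Equiv.swap a y x = x := Equiv.swap_apply_of_ne_of_ne hax.ne' hxy.ne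
  have h0 : π 0 = 1 := by simp [π]
  have hcv : cnt π 0 a x = v := by
    rw [← card_le_val (N := N) v hv]
    unfold cnt
    congr 1
    ext l
    simp only [mem_filter, mem_univ, true_and, π]
    split_ifs with h h' h' <;> simp [h, s1, s2, s3, hax, hxy, hay, hax.le, hxy.le, hay.le]
  have hcw : cnt π 0 x y = w := by
    rw [← card_le_val (N := N) w hw]
    unfold cnt
    congr 1
    ext l
    simp only [mem_filter, mem_univ, true_and, π]
    split_ifs with h h' h' <;> simp [h', s1, s2, s3, hax, hxy, hay, hax.le, hxy.le, hay.le]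
  -- path one: s, r, s ; path two: r, s, r
  have ca := (hsr : s.castSucc = x)
  have braid : sw (sw (sw π 0 s) 0 r) 0 s = sw (sw (sw π 0 r) 0 s) 0 r := by
    simp only [sw, Function.update_self, Function.update_idem, h0]
    congr 1
    simp only [adj, mul_one, ca, ← ha, ← hx, ← hy]
    ext z
    simp only [Equiv.Perm.mul_apply, Equiv.swap_apply_def]
    congr 1
    have := hax.ne; have := hxy.ne; have := hay.ne
    have := hax.ne'; have := hxy.ne'; have := hay.ne'
    split_ifs <;> simp_all
  have p0a : π 0 a = a := by simp [h0]
  have p0x : π 0 x = x := by simp [h0]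
  have p0y : π 0 y = y := by simp [h0]
  -- first path
  have A1a : sw π 0 s 0 a = a := by
    rw [sw_same, adj_apply_ne, p0a]
    · rw [p0a, ca]; exact hax.ne
    · rw [p0a]; exact hay.ne
  have A1x : sw π 0 s 0 x = y := by
    rw [sw_same]; exact adj_apply_lo _ _ _ (p0x.trans ca.symm)
  have A1y : sw π 0 s 0 y = x := by
    rw [sw_same, ← ca]; exact adj_apply_hi _ _ _ p0y
  have A2a : sw (sw π 0 s) 0 r 0 a = x := by
    rw [sw_same]; exact adj_apply_lo _ _ _ A1a
  have A2x : sw (sw π 0 s) 0 r 0 x = y := by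
    rw [sw_same, adj_apply_ne, A1x]
    · rw [A1x]; exact hay.ne'
    · rw [A1x]; exact hxy.ne'
  have B1a : sw π 0 r 0 a = x := by
    rw [sw_same]; exact adj_apply_lo _ _ _ p0a
  have B1x : sw π 0 r 0 x = a := by
    rw [sw_same]; exact adj_apply_hi _ _ _ p0x
  have B1y : sw π 0 r 0 y = y := by
    rw [sw_same, adj_apply_ne, p0y]
    · rw [p0y]; exact hay.ne'
    · rw [p0y]; exact hxy.ne'
  have B2x : sw (sw π 0 r) 0 s 0 x = a := by
    rw [sw_same, adj_apply_ne, B1x]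
    · rw [B1x, ca]; exact hax.ne
    · rw [B1x]; exact hay.ne
  have B2y : sw (sw π 0 r) 0 s 0 y = x := by
    rw [sw_same, ← ca]; exact adj_apply_hi _ _ _ B1y
  have e1 := (hD π 0 s x y (p0x.trans ca.symm) p0y).1
  have e2 := hp.loc (sw π 0 s) 0 r x (by rw [A1x]; exact hay.ne') (by rw [A1x]; exact hxy.ne')
  have e3 := (hD (sw (sw π 0 s) 0 r) 0 s a x (A2a.trans ca.symm) A2x).2
  have f1 := (hD π 0 r a x p0a p0x).2
  have f2 := hp.loc (sw π 0 r) 0 s x (by rw [B1x, ca]; exact hax.ne) (by rw [B1x]; exact hay.ne)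
  have f3 := (hD (sw (sw π 0 r) 0 s) 0 r x y B2x B2y).1
  simp only [cnt_sw, hcv, hcw] at e1 e3 f1 f3
  rw [braid] at e3
  linarith

lemma D_diff {p : Prof N M → Fin (M + 2) → ℝ} (hp : Good p) {D : Fin (M + 1) → ℕ → ℝ}
    (hD : IsD p D) (v w : ℕ) (hv : v ≤ N)
    (hw : w ≤ N) : ∀ r : Fin (M + 1), D r v - D r w = D 0 v - D 0 w := by
  have : ∀ k : ℕ, ∀ hk : k < M + 1, D ⟨k, hk⟩ v - D ⟨k, hk⟩ w = D 0 v - D 0 w := by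
    intro k
    induction k with
    | zero => intro hk; rfl
    | succ k ih =>
      intro hk
      rw [← ih (by omega)]
      exact hexagon hp hD ⟨k, by omega⟩ ⟨k + 1, hk⟩ rfl v w hv hw
  exact fun r => this r.1 r.2

lemma exists_ab {p : Prof N M → Fin (M + 2) → ℝ} (hp : Good p) :
    ∃ a b : ℕ → ℝ, (∀ k, 0 ≤ a k) ∧ (∀ v, 0 ≤ b v) ∧ (∀ v w, v + w = N → b v = b w) ∧
      ∀ π i r x y, π i x = Fin.castSucc r → π i y = Fin.succ r →
        p π x - p (sw π i r) x = a r.val + b (cnt π i x y) ∧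
        p (sw π i r) y - p π y = a r.val + b (cnt π i x y) := by
  obtain ⟨D, hD0, hD⟩ := exists_D hp
  obtain ⟨v0, hv0, hmin⟩ := Finset.exists_min_image (range (N + 1)) (fun v => D 0 v)
    ⟨0, by simp⟩
  have hv0' : v0 ≤ N := by simpa [Nat.lt_succ_iff] using hv0
  refine ⟨fun k => if h : k < M + 1 then D ⟨k, h⟩ v0 else 0,
    fun v => if v ≤ N then D 0 v - D 0 v0 else 0, ?_, ?_, ?_, ?_⟩
  · intro k; dsimp only; split_ifs
    · exact hD0 _ _
    · exact le_rfl
  · intro v; dsimp only; split_ifs with h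
    · have := hmin v (by simp; omega)
      linarith
    · exact le_rfl
  · intro v w h
    dsimp only
    rw [if_pos (by omega), if_pos (by omega), D_symm hD 0 v w h]
  · intro π i r x y hx hy
    have hc : cnt π i x y ≤ N := by
      have hne : x ≠ y := by
        rintro rfl
        rw [hx] at hy
        simp [Fin.ext_iff] at hy
      have := cnt_compl π i x y hne
      omega
    have := D_diff hp hD (cnt π i x y) v0 hc hv0' r
    have e := hD π i r x y hx hy
    dsimp only
    rw [dif_pos r.2, if_pos hc]
    simp only [Fin.eta]
    constructor <;> linarith [e.1, e.2]


def cc (π : Prof N M) (j k : Fin (M + 2)) : ℕ := (univ.filter fun l => π l j < π l k).card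

lemma cc_cnt (π : Prof N M) (i : Fin (N + 1)) (j k : Fin (M + 2)) :
    cc π j k = cnt π i j k + if π i j < π i k then 1 else 0 := by
  unfold cc cnt
  have : (univ.filter fun l => l ≠ i ∧ π l j < π l k)
      = (univ.filter fun l => π l j < π l k).erase i := by
    ext l; simp
  rw [this]
  split_ifs with h
  · rw [Finset.card_erase_add_one]; simpa using h
  · rw [Finset.erase_eq_of_notMem]
    · simp
    · simpa using h

lemma cc_compl (π : Prof N M) (j k : Fin (M + 2)) (h : j ≠ k) : cc π j k + cc π k j = N + 1 := by
  have := cnt_compl π 0 j k h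
  rw [cc_cnt π 0 j k, cc_cnt π 0 k j]
  have h' : π 0 j ≠ π 0 k := fun h' => h ((π 0).injective h')
  rcases lt_or_gt_of_ne h' with h1 | h1
  · rw [if_pos h1, if_neg (not_lt.2 h1.le)]; omega
  · rw [if_neg (not_lt.2 h1.le), if_pos h1]; omega

noncomputable def Mform (F G : ℕ → ℝ) (π : Prof N M) (j : Fin (M + 2)) : ℝ :=
  ∑ i, F (π i j).val + ∑ k ∈ univ.erase j, G (cc π j k)

lemma sum_sw (F : ℕ → ℝ) (π : Prof N M) (i : Fin (N + 1)) (r : Fin (M + 1)) (j : Fin (M + 2)) :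
    ∑ l, F (sw π i r l j).val = ∑ l, F (π l j).val - F (π i j).val + F (adj r (π i) j).val := by
  rw [← Finset.add_sum_erase univ _ (mem_univ i), ← Finset.add_sum_erase univ
    (fun l => F (π l j).val) (mem_univ i), sw_same]
  have : ∑ l ∈ univ.erase i, F (sw π i r l j).val = ∑ l ∈ univ.erase i, F (π l j).val := by
    apply Finset.sum_congr rfl
    intro l hl
    rw [sw_ne _ _ _ _ (by simpa using hl)]
  rw [this]
  ring

lemma cc_sw (π : Prof N M) (i : Fin (N + 1)) (r : Fin (M + 1)) (j k : Fin (M + 2))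
    (h1 : ¬ (π i j = r.castSucc ∧ π i k = r.succ)) (h2 : ¬ (π i k = r.castSucc ∧ π i j = r.succ)) :
    cc (sw π i r) j k = cc π j k := by
  rw [cc_cnt _ i, cc_cnt _ i, cnt_sw, sw_same]
  simp only [adj_lt_iff r (π i) j k h1 h2]

lemma sum_G_sw (G : ℕ → ℝ) (π : Prof N M) (i : Fin (N + 1)) (r : Fin (M + 1)) (j k : Fin (M + 2))
    (hjk : k ≠ j) (h : ∀ z, z ≠ j → z ≠ k → cc (sw π i r) j z = cc π j z) :
    ∑ z ∈ univ.erase j, G (cc (sw π i r) j z) =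
      ∑ z ∈ univ.erase j, G (cc π j z) - G (cc π j k) + G (cc (sw π i r) j k) := by
  have hk : k ∈ univ.erase j := by simp [hjk]
  rw [← Finset.add_sum_erase _ _ hk, ← Finset.add_sum_erase _ (fun z => G (cc π j z)) hk]
  have : ∑ z ∈ (univ.erase j).erase k, G (cc (sw π i r) j z)
      = ∑ z ∈ (univ.erase j).erase k, G (cc π j z) := by
    apply Finset.sum_congr rfl
    intro z hz
    simp at hz
    rw [h z hz.2 hz.1]
  rw [this]
  ring

lemma diff_sw {p : Prof N M → Fin (M + 2) → ℝ} (hp : Good p) {a b F G : ℕ → ℝ}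
    (hb : ∀ v w, v + w = N → b v = b w)
    (hab : ∀ π i r x y, π i x = Fin.castSucc r → π i y = Fin.succ r →
        p π x - p (sw π i r) x = a r.val + b (cnt π i x y) ∧
        p (sw π i r) y - p π y = a r.val + b (cnt π i x y))
    (hF : ∀ t, t < M + 1 → F t - F (t + 1) = a t)
    (hG : ∀ v, v ≤ N → G (v + 1) - G v = b v)
    (π : Prof N M) (i : Fin (N + 1)) (r : Fin (M + 1)) (j : Fin (M + 2)) :
    p (sw π i r) j - Mform F G (sw π i r) j = p π j - Mform F G π j := by
  obtain ⟨x, hx⟩ : ∃ x, π i x = r.castSucc := (π i).surjective _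
  obtain ⟨y, hy⟩ : ∃ x, π i x = r.succ := (π i).surjective _
  have hxy : x ≠ y := by
    rintro rfl
    rw [hx] at hy
    simp [Fin.ext_iff] at hy
  have hlt : π i x < π i y := by rw [hx, hy]; simp
  have hc := cnt_compl π i x y hxy
  have e := hab π i r x y hx hy
  have hF' := hF r.val r.2
  have hcs : r.castSucc ≠ r.succ := by simp [Fin.ext_iff]
  have ax := adj_apply_lo r (π i) x hx
  have ay := adj_apply_hi r (π i) y hy
  unfold Mform
  rw [sum_sw]
  by_cases hjx : j = x
  · subst hjx
    rw [sum_G_sw G π i r j y hxy.symm, cc_cnt π i j y, cc_cnt (sw π i r) i j y, cnt_sw, sw_same,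
      if_pos hlt, ax, ay, hx, if_neg (by simp [Fin.le_def])]
    · have := hG (cnt π i j y) (by omega)
      simp only [Fin.val_castSucc, Fin.val_succ, add_zero]
      linarith [e.1]
    · intro z hz hz'
      apply cc_sw
      · rintro ⟨_, h⟩; exact hz' ((π i).injective (h.trans hy.symm))
      · rintro ⟨h, _⟩; exact hz ((π i).injective (h.trans hx.symm))
  by_cases hjy : j = y
  · subst hjy
    rw [sum_G_sw G π i r j x hxy, cc_cnt π i j x, cc_cnt (sw π i r) i j x, cnt_sw, sw_same,
      if_neg (not_lt.2 hlt.le), ax, ay, hy, if_pos (by simp)]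
    · have := hG (cnt π i j x) (by omega)
      rw [← hb (cnt π i x j) _ hc] at this
      simp only [Fin.val_castSucc, Fin.val_succ, add_zero]
      linarith [e.2]
    · intro z hz hz'
      apply cc_sw
      · rintro ⟨h, _⟩
        rw [hy] at h
        exact hcs h.symm
      · rintro ⟨h, _⟩; exact hz' ((π i).injective (h.trans hx.symm))
  · have n1 : π i j ≠ r.castSucc := fun h => hjx ((π i).injective (h.trans hx.symm))
    have n2 : π i j ≠ r.succ := fun h => hjy ((π i).injective (h.trans hy.symm))
    rw [hp.loc π i r j n1 n2, adj_apply_ne _ _ _ n1 n2]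
    have : ∑ z ∈ univ.erase j, G (cc (sw π i r) j z) = ∑ z ∈ univ.erase j, G (cc π j z) := by
      apply Finset.sum_congr rfl
      intro z _
      rw [cc_sw]
      · tauto
      · tauto
    rw [this]
    ring

lemma const_of_sw {E : Prof N M → ℝ} (h : ∀ π i r, E (sw π i r) = E π) (π π' : Prof N M) :
    E π = E π' := by
  have key : ∀ S : Finset (Fin (N + 1)), E (S.piecewise π' π) = E π := by
    intro S
    induction S using Finset.induction_on with
    | empty => simp
    | insert l S hlS ih =>
      rw [Finset.piecewise_insert, ← ih]
      set ψ := S.piecewise π' π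
      have := conn (π' l) (fun _ => True) (fun ρ => E (Function.update ψ l ρ)) ?_ (ψ l) trivial
      · rw [← this]; simp
      · intro ρ r _ _
        refine ⟨trivial, ?_⟩
        have := h (Function.update ψ l ρ) l r
        simpa [sw] using this
  have := key univ
  simpa using this.symm

lemma p_eq_Mform {p : Prof N M → Fin (M + 2) → ℝ} (hp : Good p) {a b F G : ℕ → ℝ}
    (hb : ∀ v w, v + w = N → b v = b w)
    (hab : ∀ π i r x y, π i x = Fin.castSucc r → π i y = Fin.succ r →
        p π x - p (sw π i r) x = a r.val + b (cnt π i x y) ∧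
        p (sw π i r) y - p π y = a r.val + b (cnt π i x y))
    (hF : ∀ t, t < M + 1 → F t - F (t + 1) = a t)
    (hG : ∀ v, v ≤ N → G (v + 1) - G v = b v)
    (hF0 : F (M + 1) = 0) (hG0 : (M + 1) * G 0 = p (fun _ => 1) (Fin.last _))
    (π : Prof N M) (j : Fin (M + 2)) : p π j = Mform F G π j := by
  let π' : Prof N M := fun _ => 1 * Equiv.swap j (Fin.last _)
  have h := const_of_sw (E := fun π => p π j - Mform F G π j)
    (fun π i r => diff_sw hp hb hab hF hG π i r j) π π'
  have h1 : p π' j = p (fun _ => 1) (Fin.last _) := by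
    have := hp.neut (fun _ => 1) (Equiv.swap j (Fin.last _)) j
    rw [Equiv.swap_apply_left] at this
    exact this
  have h2 : Mform F G π' j = (M + 1) * G 0 := by
    unfold Mform
    have e1 : ∀ i, F (π' i j).val = 0 := by
      intro i; simp [π', hF0]
    have e2 : ∀ k ∈ univ.erase j, G (cc π' j k) = G 0 := by
      intro k hk
      congr 1
      unfold cc
      simp [π', Fin.le_last]
    rw [Finset.sum_congr rfl (fun i _ => e1 i), Finset.sum_congr rfl e2]
    simp
  rw [h1, h2, hG0] at h
  linarith

noncomputable def wOne (N M : ℕ) (a : ℕ → ℝ) (q : ℕ) : ℝ :=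
  if q ≤ M + 1 then (q : ℝ) * (N + 1) * a (q - 1) else 0

noncomputable def wTwo (N M : ℕ) (b : ℕ → ℝ) (R : ℝ) (q : ℕ) : ℝ :=
  if q = N + 2 then (M + 2) * R
  else if 2 * q = N + 2 then (M + 2) * (M + 1) * b (q - 1) / 2
  else (M + 2) * (M + 1) * b (q - 1)

noncomputable def FF (N M : ℕ) (w : ℕ → ℝ) (t : ℕ) : ℝ :=
  ∑ q ∈ Finset.Icc 1 (M + 2), w q * ((if t + 1 ≤ q then ((q : ℝ))⁻¹ else 0) / (N + 1))

noncomputable def gg (N M : ℕ) (q s : ℕ) : ℝ :=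
  ((if q ≤ s then 1 else 0) + (if N + 1 < q + s then 1 else 0)) / ((M + 2) * (M + 1))

noncomputable def GG (N M : ℕ) (w : ℕ → ℝ) (s : ℕ) : ℝ :=
  ∑ q ∈ Finset.Icc ((N + 1) / 2 + 1) (N + 2), w q * gg N M q s

lemma FF_diff (N M : ℕ) (a : ℕ → ℝ) (t : ℕ) (ht : t < M + 1) :
    FF N M (wOne N M a) t - FF N M (wOne N M a) (t + 1) = a t := by
  unfold FF
  rw [← Finset.sum_sub_distrib, Finset.sum_eq_single (t + 1)]
  · rw [if_pos le_rfl, if_neg (by omega), wOne, if_pos (by omega)]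
    have : (N : ℝ) + 1 ≠ 0 := by positivity
    have : (t : ℝ) + 1 ≠ 0 := by positivity
    push_cast
    simp
    field_simp
  · intro q _ hq
    by_cases h : t + 1 ≤ q
    · rw [if_pos h, if_pos (by omega)]; ring
    · rw [if_neg h, if_neg (by omega)]; ring
  · intro h
    simp at h
    omega

lemma FF_last (N M : ℕ) (a : ℕ → ℝ) : FF N M (wOne N M a) (M + 1) = 0 := by
  unfold FF
  apply Finset.sum_eq_zero
  intro q _
  by_cases h : M + 1 + 1 ≤ q
  · rw [wOne, if_neg (by omega)]; simp
  · rw [if_neg h]; simp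

lemma GG_zero (N M : ℕ) (b : ℕ → ℝ) (R : ℝ) : ((M : ℝ) + 1) * GG N M (wTwo N M b R) 0 = R := by
  unfold GG
  rw [Finset.sum_eq_single (N + 2)]
  · rw [wTwo, if_pos rfl, gg]
    simp
    field_simp
  · intro q hq hq'
    rw [mem_Icc] at hq
    rw [gg, if_neg (by omega), if_neg (by omega)]; simp
  · intro h; simp at h; omega

lemma GG_diff (N M : ℕ) (b : ℕ → ℝ) (R : ℝ) (hb : ∀ v w, v + w = N → b v = b w)
    (v : ℕ) (hv : v ≤ N) :
    GG N M (wTwo N M b R) (v + 1) - GG N M (wTwo N M b R) v = b v := by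
  unfold GG
  rw [← Finset.sum_sub_distrib]
  have hg : ∀ q, wTwo N M b R q * gg N M q (v + 1) - wTwo N M b R q * gg N M q v =
      (if q = v + 1 then wTwo N M b R q / ((M + 2) * (M + 1)) else 0) +
      (if q = N + 1 - v then wTwo N M b R q / ((M + 2) * (M + 1)) else 0) := by
    intro q
    unfold gg
    split_ifs <;> first | (exfalso; omega) | ring
  rw [Finset.sum_congr rfl (fun q _ => hg q), Finset.sum_add_distrib, Finset.sum_ite_eq',
    Finset.sum_ite_eq']
  have hK : ((M : ℝ) + 2) * (M + 1) ≠ 0 := by positivity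
  have hM1 : ((M : ℝ) + 1) ≠ 0 := by positivity
  have hM2 : ((M : ℝ) + 2) ≠ 0 := by positivity
  by_cases h : 2 * (v + 1) = N + 2
  · have e : N + 1 - v = v + 1 := by omega
    rw [e, if_pos (by simp; omega), wTwo, if_neg (by omega), if_pos h]
    simp
    field_simp
    ring
  · by_cases h' : (N + 1) / 2 ≤ v
    · rw [if_pos (by simp; omega), if_neg (by simp; omega), wTwo, if_neg (by omega),
        if_neg (by omega)]
      simp
      field_simp
    · rw [if_neg (by simp; omega), if_pos (by simp; omega), wTwo, if_neg (by omega),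
        if_neg (by omega), hb v (N + 1 - v - 1) (by omega)]
      field_simp
      ring

/-- `π` is the profile of rankings of `u`. -/
def OrdRep {N M : ℕ} (u : Fin (N + 1) → Fin (M + 2) → ℝ) (π : Prof N M) : Prop :=
  ∀ i j k, u i j < u i k ↔ π i k < π i j

lemma rnk_eq {M : ℕ} (v : Fin (M + 2) → ℝ) (ρ : Rkg M) (h : ∀ j k, v j < v k ↔ ρ k < ρ j)
    (j : Fin (M + 2)) : rnk v j = (ρ j).val + 1 := by
  unfold rnk
  have hinj : ∀ j k, v j = v k → j = k := by
    intro j k hjk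
    apply ρ.injective
    have h1 := h j k
    have h2 := h k j
    rw [hjk] at h1 h2
    simp at h1 h2
    exact le_antisymm h1 h2
  have : (univ.filter fun j' => v j < v j' ∨ (v j' = v j ∧ j' ≤ j)) =
      (Finset.Iic (ρ j)).map ρ.symm.toEmbedding := by
    ext k
    simp only [mem_filter, mem_univ, true_and, mem_map_equiv, Equiv.symm_symm, mem_Iic]
    rw [h]
    constructor
    · rintro (h | ⟨h, _⟩)
      · exact h.le
      · rw [hinj _ _ h]
    · intro h
      rcases lt_or_eq_of_le h with h | h
      · exact Or.inl h
      · right; rw [ρ.injective h]; simp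
  rw [this]
  simp

lemma prefers_iff {M : ℕ} (v : Fin (M + 2) → ℝ) (ρ : Rkg M) (h : ∀ j k, v j < v k ↔ ρ k < ρ j)
    (j k : Fin (M + 2)) (hjk : j ≠ k) : Prefers v j k ↔ ρ j < ρ k := by
  unfold Prefers
  rw [h]
  constructor
  · rintro (h' | ⟨h', _⟩)
    · exact h'
    · exfalso
      apply hjk
      apply ρ.injective
      have h1 := h j k
      have h2 := h k j
      rw [h'] at h1 h2
      simp at h1 h2
      exact le_antisymm h1 h2
  · exact Or.inl

lemma sum_Jone {N M : ℕ} (w : ℕ → ℝ) (u : Fin (N + 1) → Fin (M + 2) → ℝ) (π : Prof N M)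
    (h : OrdRep u π) (j : Fin (M + 2)) :
    ∑ q ∈ Finset.Icc 1 (M + 2), w q * Jone q u j = ∑ i, FF N M w (π i j).val := by
  unfold FF Jone
  rw [Finset.sum_comm]
  apply Finset.sum_congr rfl
  intro q _
  rw [← Finset.mul_sum, ← Finset.sum_div]
  simp only [rnk_eq _ _ (h _)]
  push_cast
  rfl

lemma Jtwo_eq {N M : ℕ} (u : Fin (N + 1) → Fin (M + 2) → ℝ) (π : Prof N M)
    (h : OrdRep u π) (q : ℕ) (hq : (N + 1) / 2 + 1 ≤ q) (j : Fin (M + 2)) :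
    Jtwo q u j = ∑ k ∈ univ.erase j, gg N M q (cc π j k) := by
  have hterm : ∀ j₀ j₁ : Fin (M + 2), (if j₀ = j₁ then (0 : ℝ)
      else
        if q ≤ (Finset.univ.filter fun i => Prefers (u i) j₀ j₁).card then
          (if j = j₀ then (1 : ℝ) else 0)
        else if q ≤ (N + 1) - (Finset.univ.filter fun i => Prefers (u i) j₀ j₁).card then
          (if j = j₁ then (1 : ℝ) else 0)
        else ((if j = j₀ then (1 : ℝ)/2 else 0) + (if j = j₁ then (1 : ℝ)/2 else 0))) =
      (if j = j₀ then (if j ≠ j₁ then (M + 2) * (M + 1) * gg N M q (cc π j j₁) / 2 else 0) else 0)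
      + (if j = j₁ then (if j ≠ j₀ then (M + 2) * (M + 1) * gg N M q (cc π j j₀) / 2 else 0)
        else 0) := by
    intro j₀ j₁
    have hgg : ∀ s, ((M : ℝ) + 2) * (M + 1) * gg N M q s / 2 =
        ((if q ≤ s then 1 else 0) + (if N + 1 < q + s then 1 else 0)) / 2 := by
      intro s
      unfold gg
      have hM1 : ((M : ℝ) + 1) ≠ 0 := by positivity
      have hM2 : ((M : ℝ) + 2) ≠ 0 := by positivity
      field_simp
    by_cases h01 : j₀ = j₁
    · subst h01
      rw [if_pos rfl]
      by_cases hj : j = j₀ <;> simp [hj]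
    rw [if_neg h01]
    have hc : (Finset.univ.filter fun i => Prefers (u i) j₀ j₁).card = cc π j₀ j₁ := by
      unfold cc
      congr 1
      ext l
      simp only [mem_filter, mem_univ, true_and]
      exact prefers_iff _ _ (h l) _ _ h01
    rw [hc]
    have hcc := cc_compl π j₀ j₁ h01
    simp only [hgg]
    by_cases hj0 : j = j₀
    · subst hj0
      simp only [if_true, if_neg h01, ne_eq, not_true, if_false, not_false_eq_true, h01]
      split_ifs <;> first | (exfalso; omega) | norm_num
    by_cases hj1 : j = j₁
    · subst hj1
      simp only [if_true, if_neg hj0, ne_eq, not_true, if_false, not_false_eq_true, hj0]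
      split_ifs <;> first | (exfalso; omega) | norm_num
    · simp [hj0, hj1]
  unfold Jtwo
  simp only [hterm, Finset.sum_add_distrib]
  rw [Finset.sum_comm (f := fun (j₀ j₁ : Fin (M + 2)) => if j = j₁ then
    (if j ≠ j₀ then ((M : ℝ) + 2) * (M + 1) * gg N M q (cc π j j₀) / 2 else 0) else 0)]
  have hs : ∀ (f : Fin (M + 2) → ℝ), ∑ j₁ : Fin (M + 2), (if j ≠ j₁ then f j₁ else 0) =
      ∑ k ∈ univ.erase j, f k := by
    intro f
    rw [← Finset.sum_filter]
    congr 1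
    ext k
    simp [eq_comm]
  have hs2 : ∀ (f : Fin (M + 2) → ℝ), ∑ x : Fin (M + 2), ∑ y : Fin (M + 2),
      (if j = x then (if j ≠ y then f y else 0) else 0) = ∑ k ∈ univ.erase j, f k := by
    intro f
    rw [Finset.sum_eq_single j]
    · simp only [if_true]; exact hs f
    · intro b _ hb
      simp [hb.symm]
    · simp
  rw [hs2 (fun y => ((M : ℝ) + 2) * (M + 1) * gg N M q (cc π j y) / 2),
    ← Finset.sum_div, ← Finset.mul_sum]
  push_cast
  have hM1 : ((M : ℝ) + 1) ≠ 0 := by positivity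
  have hM2 : ((M : ℝ) + 2) ≠ 0 := by positivity
  field_simp
  ring

lemma sum_Jtwo {N M : ℕ} (w : ℕ → ℝ) (u : Fin (N + 1) → Fin (M + 2) → ℝ) (π : Prof N M)
    (h : OrdRep u π) (j : Fin (M + 2)) :
    ∑ q ∈ Finset.Icc ((N + 1) / 2 + 1) (N + 2), w q * Jtwo q u j
      = ∑ k ∈ univ.erase j, GG N M w (cc π j k) := by
  unfold GG
  rw [Finset.sum_comm]
  apply Finset.sum_congr rfl
  intro q hq
  rw [← Finset.mul_sum, Jtwo_eq u π h q (mem_Icc.1 hq).1]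

lemma total_Jone {N M : ℕ} (u : Fin (N + 1) → Fin (M + 2) → ℝ) (π : Prof N M)
    (h : OrdRep u π) (q : ℕ) (hq : 1 ≤ q) (hq' : q ≤ M + 2) : ∑ j, Jone q u j = 1 := by
  unfold Jone
  rw [← Finset.sum_div, Finset.sum_comm]
  simp only [rnk_eq _ _ (h _)]
  have : ∀ i, ∑ j, (if (π i j).val + 1 ≤ q then ((q : ℝ))⁻¹ else 0) = 1 := by
    intro i
    rw [Equiv.sum_comp (π i) (fun k : Fin (M + 2) => if k.val + 1 ≤ q then ((q : ℝ))⁻¹ else 0),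
      Fin.sum_univ_eq_sum_range (fun k : ℕ => if k + 1 ≤ q then ((q : ℝ))⁻¹ else 0),
      ← Finset.sum_filter]
    have : (range (M + 2)).filter (fun k => k + 1 ≤ q) = range q := by
      ext k; simp; omega
    rw [this]
    have : (q : ℝ) ≠ 0 := by positivity
    simp [this]
  rw [Finset.sum_congr rfl (fun i _ => this i)]
  have : (N : ℝ) + 1 ≠ 0 := by positivity
  simp [this]

lemma total_Jtwo {N M : ℕ} (u : Fin (N + 1) → Fin (M + 2) → ℝ) (q : ℕ) :
    ∑ j, Jtwo q u j = 1 := by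
  unfold Jtwo
  rw [← Finset.sum_div, Finset.sum_comm]
  have : ∀ j₀ : Fin (M + 2), ∑ j : Fin (M + 2), ∑ j₁ : Fin (M + 2), (if j₀ = j₁ then (0 : ℝ)
      else
        if q ≤ (Finset.univ.filter fun i => Prefers (u i) j₀ j₁).card then
          (if j = j₀ then (1 : ℝ) else 0)
        else if q ≤ (N + 1) - (Finset.univ.filter fun i => Prefers (u i) j₀ j₁).card then
          (if j = j₁ then (1 : ℝ) else 0)
        else ((if j = j₀ then (1 : ℝ)/2 else 0) + (if j = j₁ then (1 : ℝ)/2 else 0))) =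
      (M : ℝ) + 1 := by
    intro j₀
    rw [Finset.sum_comm]
    have : ∀ j₁ : Fin (M + 2), ∑ j : Fin (M + 2), (if j₀ = j₁ then (0 : ℝ)
      else
        if q ≤ (Finset.univ.filter fun i => Prefers (u i) j₀ j₁).card then
          (if j = j₀ then (1 : ℝ) else 0)
        else if q ≤ (N + 1) - (Finset.univ.filter fun i => Prefers (u i) j₀ j₁).card then
          (if j = j₁ then (1 : ℝ) else 0)
        else ((if j = j₀ then (1 : ℝ)/2 else 0) + (if j = j₁ then (1 : ℝ)/2 else 0))) =
        if j₀ = j₁ then 0 else 1 := by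
      intro j₁
      split_ifs
      · simp
      · simp
      · simp
      · rw [Finset.sum_add_distrib]; simp; norm_num
    rw [Finset.sum_congr rfl (fun j₁ _ => this j₁)]
    have e : ∀ j₁ : Fin (M + 2), (if j₀ = j₁ then (0 : ℝ) else 1) = 1 - if j₀ = j₁ then 1 else 0 := by
      intro j₁; split_ifs <;> simp
    rw [Finset.sum_congr rfl (fun j₁ _ => e j₁), Finset.sum_sub_distrib]
    simp
    ring
  rw [Finset.sum_congr rfl (fun j₀ _ => this j₀)]
  rw [show M + 2 - 1 = M + 1 from rfl]
  push_cast
  simp only [sum_const, card_univ, Fintype.card_fin, nsmul_eq_mul]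
  push_cast
  have hM1 : ((M : ℝ) + 1) ≠ 0 := by positivity
  have hM2 : ((M : ℝ) + 2) ≠ 0 := by positivity
  field_simp

noncomputable def ut {M : ℕ} (ρ : Rkg M) (j : Fin (M + 2)) : ℝ := 1 - ((ρ j).val : ℝ) / (M + 1)

lemma ut_lt {M : ℕ} (ρ : Rkg M) (j k : Fin (M + 2)) : ut ρ j < ut ρ k ↔ ρ k < ρ j := by
  unfold ut
  have : (0 : ℝ) < M + 1 := by positivity
  rw [sub_lt_sub_iff_left, div_lt_div_iff_of_pos_right this, Nat.cast_lt, Fin.lt_def]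

/-- a mixture of the indicator of the top `t` positions and `ut`. -/
noncomputable def um {M : ℕ} (ρ : Rkg M) (t : ℕ) (ε : ℝ) (j : Fin (M + 2)) : ℝ :=
  (1 - ε) * (if (ρ j).val < t then 1 else 0) + ε * ut ρ j

lemma um_lt_of {M : ℕ} (ρ : Rkg M) (t : ℕ) (ε : ℝ) (h0 : 0 < ε) (h1 : ε ≤ 1) (j k : Fin (M + 2))
    (h : ρ k < ρ j) : um ρ t ε j < um ρ t ε k := by
  have h2 := (ut_lt ρ j k).2 h
  unfold um
  have h3 : ε * ut ρ j < ε * ut ρ k := mul_lt_mul_of_pos_left h2 h0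
  have h4 : (if (ρ j).val < t then (1 : ℝ) else 0) ≤ (if (ρ k).val < t then 1 else 0) := by
    rw [Fin.lt_def] at h
    split_ifs <;> first | (exfalso; omega) | norm_num
  have h5 := mul_le_mul_of_nonneg_left h4 (sub_nonneg.2 h1)
  linarith

lemma um_lt {M : ℕ} (ρ : Rkg M) (t : ℕ) (ε : ℝ) (h0 : 0 < ε) (h1 : ε ≤ 1) (j k : Fin (M + 2)) :
    um ρ t ε j < um ρ t ε k ↔ ρ k < ρ j := by
  constructor
  · intro h
    by_contra hc
    rcases lt_or_eq_of_le (not_lt.1 hc) with h' | h'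
    · exact lt_asymm h (um_lt_of ρ t ε h0 h1 k j h')
    · rw [ρ.injective h'] at h
      exact lt_irrefl _ h
  · exact um_lt_of ρ t ε h0 h1 j k

lemma um_pref {M : ℕ} (ρ : Rkg M) (t : ℕ) (ε : ℝ) (h0 : 0 < ε) (h1 : ε ≤ 1) (ht : 0 < t)
    (ht' : t ≤ M + 1) : IsPrefU (um ρ t ε) := by
  have hM : (0 : ℝ) < M + 1 := by positivity
  have hu : ∀ j, 0 ≤ ut ρ j ∧ ut ρ j ≤ 1 := by
    intro j
    unfold ut
    have h1 : ((ρ j).val : ℝ) ≤ M + 1 := by exact_mod_cast Nat.lt_succ_iff.1 (ρ j).2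
    have h2 : ((ρ j).val : ℝ) / (M + 1) ≤ 1 := (div_le_one hM).2 h1
    have h3 : 0 ≤ ((ρ j).val : ℝ) / (M + 1) := by positivity
    constructor <;> linarith
  refine ⟨⟨?_, ⟨ρ.symm (Fin.last _), ?_⟩, ⟨ρ.symm 0, ?_⟩⟩, ?_⟩
  · intro j
    unfold um
    obtain ⟨a, b⟩ := hu j
    have c : 0 ≤ ε * ut ρ j := by positivity
    have d : ε * ut ρ j ≤ ε := by nlinarith
    split_ifs <;> constructor <;> linarith
  · unfold um ut
    simp [not_lt.2 ht']
    right
    field_simp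
    ring
  · simp [um, ut, ht]
  · intro j k h
    apply ρ.injective
    have a := um_lt ρ t ε h0 h1 j k
    have b := um_lt ρ t ε h0 h1 k j
    rw [h] at a b
    simp at a b
    exact le_antisymm a b

lemma ut_eq_um {M : ℕ} (ρ : Rkg M) : ut ρ = um ρ 1 1 := by
  ext j; simp [um]

lemma ut_pref {M : ℕ} (ρ : Rkg M) : IsPrefU (ut ρ) := by
  rw [ut_eq_um]
  exact um_pref ρ 1 1 one_pos le_rfl one_pos (by omega)

lemma le_zero_of_mix (A B : ℝ) (h : ∀ ε : ℝ, 0 < ε → ε ≤ 1 → (1 - ε) * A + ε * B ≤ 0) : A ≤ 0 := by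
  by_contra hA
  push Not at hA
  have hd : 0 < 2 * (A + |B|) := by positivity
  have h1 := h (A / (2 * (A + |B|))) (by positivity)
    (by rw [div_le_one hd]; linarith [abs_nonneg B])
  set ε := A / (2 * (A + |B|)) with hε
  have e0 : 0 < ε := by positivity
  have e1 : ε * (2 * (A + |B|)) = A := by rw [hε]; field_simp
  have := neg_abs_le B
  nlinarith

/-- the mechanism on ranking profiles -/
noncomputable def pJ {N M : ℕ} (J : (Fin (N + 1) → Fin (M + 2) → ℝ) → Fin (M + 2) → ℝ)
    (π : Prof N M) : Fin (M + 2) → ℝ := J (fun i => ut (π i))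

lemma pJ_top {N M : ℕ} {J : (Fin (N + 1) → Fin (M + 2) → ℝ) → Fin (M + 2) → ℝ}
    (hJ : MechU J) (hOrd : OrdinalMech J) (hT : Truthful J) (π : Prof N M) (i : Fin (N + 1))
    (ρ' : Rkg M) (t : ℕ) :
    ∑ j, (if (π i j).val < t then pJ J (Function.update π i ρ') j else 0) ≤
      ∑ j, (if (π i j).val < t then pJ J π j else 0) := by
  have hsum : ∀ π : Prof N M, ∑ j, pJ J π j = 1 := fun π => (hJ _ (fun i => ut_pref (π i))).2
  rcases Nat.eq_zero_or_pos t with rfl | ht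
  · simp
  rcases Nat.lt_or_ge (M + 1) t with ht' | ht'
  · have : ∀ j, (π i j).val < t := fun j => by have := (π i j).2; omega
    simp only [this, if_true, hsum]
    exact le_rfl
  have hup : (fun l => ut (Function.update π i ρ' l))
      = Function.update (fun l => ut (π l)) i (ut ρ') := by
    ext l j
    by_cases h : l = i
    · subst h; simp
    · simp [h]
  have key := le_zero_of_mix
    (∑ j, (if (π i j).val < t then pJ J (Function.update π i ρ') j else 0) -
      ∑ j, (if (π i j).val < t then pJ J π j else 0))
    (∑ j, pJ J (Function.update π i ρ') j * ut (π i) j - ∑ j, pJ J π j * ut (π i) j) ?_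
  · linarith
  intro ε h0 h1
  have hprof : IsProfileU (Function.update (fun l => ut (π l)) i (um (π i) t ε)) := by
    intro l
    by_cases h : l = i
    · subst h; simpa using um_pref (π l) t ε h0 h1 ht ht'
    · simpa [h] using ut_pref (π l)
  have hJu : J (Function.update (fun l => ut (π l)) i (um (π i) t ε)) = pJ J π := by
    apply hOrd _ _ hprof (fun l => ut_pref (π l))
    intro l j k
    by_cases h : l = i
    · subst h; simp [um_lt _ _ _ h0 h1, ut_lt]
    · simp [h]
  have hh := hT _ hprof i (ut ρ') (ut_pref ρ')
  rw [hJu, Function.update_idem, ← hup] at hh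
  simp only [Function.update_self] at hh
  change ∑ j, pJ J (Function.update π i ρ') j * um (π i) t ε j ≤ _ at hh
  have hex : ∀ P : Fin (M + 2) → ℝ, ∑ j, P j * um (π i) t ε j =
      (1 - ε) * ∑ j, (if (π i j).val < t then P j else 0) + ε * ∑ j, P j * ut (π i) j := by
    intro P
    rw [Finset.mul_sum, Finset.mul_sum, ← Finset.sum_add_distrib]
    apply Finset.sum_congr rfl
    intro j _
    unfold um
    split_ifs <;> ring
  rw [hex, hex] at hh
  linarith

lemma good_pJ {N M : ℕ} {J : (Fin (N + 1) → Fin (M + 2) → ℝ) → Fin (M + 2) → ℝ}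
    (hJ : MechU J) (hOrd : OrdinalMech J) (hN : Neutral J)
    (hA : AnonymousMech J) (hT : Truthful J) : Good (pJ J) := by
  classical
  let H : Prof N M → Fin (N + 1) → Fin (M + 1) → ℕ → ℝ := fun π i r t =>
    ∑ j, (if (π i j).val < t then pJ J π j - pJ J (sw π i r) j else 0)
  have H_eq : ∀ π i r t, H π i r t = ∑ j, (if (π i j).val < t then pJ J π j else 0) -
      ∑ j, (if (π i j).val < t then pJ J (sw π i r) j else 0) := by
    intro π i r t
    rw [← Finset.sum_sub_distrib]
    apply Finset.sum_congr rfl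
    intro j _
    split_ifs <;> simp
  have H_nonneg : ∀ π i r t, 0 ≤ H π i r t := by
    intro π i r t
    rw [H_eq]
    have := pJ_top hJ hOrd hT π i (adj r (π i)) t
    change _ - ∑ j, (if (π i j).val < t then pJ J (Function.update π i (adj r (π i))) j else 0) ≥ 0
    linarith
  have H_zero : ∀ π i r t, t ≠ Fin.val r + 1 → H π i r t = 0 := by
    intro π i r t ht
    apply le_antisymm _ (H_nonneg π i r t)
    have h := H_nonneg (sw π i r) i r t
    rw [H_eq, sw_sw] at h
    rw [H_eq]
    have hiff : ∀ j, (sw π i r i j).val < t ↔ (π i j).val < t := by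
      intro j
      rw [sw_same]
      by_cases h1 : π i j = r.castSucc
      · rw [adj_apply_lo _ _ _ h1, h1]; simp; omega
      by_cases h2 : π i j = r.succ
      · rw [adj_apply_hi _ _ _ h2, h2]; simp; omega
      rw [adj_apply_ne _ _ _ h1 h2]
    simp only [hiff] at h
    linarith
  have H_succ : ∀ π i r j, pJ J π j - pJ J (sw π i r) j =
      H π i r ((π i j).val + 1) - H π i r (π i j).val := by
    intro π i r j
    simp only [H]
    rw [← Finset.sum_sub_distrib, Finset.sum_eq_single j]
    · simp
    · intro k _ hk
      have : (π i k).val ≠ (π i j).val := fun h => hk ((π i).injective (Fin.ext h))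
      split_ifs <;> first | (exfalso; omega) | simp
    · simp
  constructor
  · intro π i r j h1 h2
    have := H_succ π i r j
    have h1' : (π i j).val ≠ r.val := fun h => h1 (Fin.ext h)
    have h2' : (π i j).val ≠ r.val + 1 := fun h => h2 (Fin.ext h)
    rw [H_zero _ _ _ _ (by omega), H_zero _ _ _ _ h2'] at this
    linarith
  · intro π i r x y hx hy
    have e1 := H_succ π i r x
    have e2 := H_succ π i r y
    rw [hx, Fin.val_castSucc, H_zero _ _ _ r.val (by omega)] at e1
    rw [hy, Fin.val_succ, H_zero _ _ _ (r.val + 1 + 1) (by omega)] at e2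
    linarith
  · intro π i r x hx
    have e1 := H_succ π i r x
    rw [hx, Fin.val_castSucc, H_zero _ _ _ r.val (by omega)] at e1
    have := H_nonneg π i r (r.val + 1)
    linarith
  · intro π τ j
    exact hN τ (fun i => ut (π i)) (fun i => ut_pref (π i)) j
  · intro π σ
    exact hA σ (fun i => ut (π i)) (fun i => ut_pref (π i))

lemma exists_rkg {M : ℕ} (v : Fin (M + 2) → ℝ) (hv : Function.Injective v) :
    ∃ ρ : Rkg M, ∀ j k, v j < v k ↔ ρ k < ρ j := by
  classical
  let f : Fin (M + 2) → Fin (M + 2) := fun j => ⟨(univ.filter fun k => v j < v k).card, by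
    have : (univ.filter fun k => v j < v k) ⊂ univ := by
      rw [Finset.ssubset_univ_iff]
      intro h
      have : j ∈ (univ.filter fun k => v j < v k) := by rw [h]; simp
      simp at this
    have := Finset.card_lt_card this
    simpa using this⟩
  have hf : ∀ j k, v j < v k → f k < f j := by
    intro j k h
    show (univ.filter fun l => v k < v l).card < (univ.filter fun l => v j < v l).card
    apply Finset.card_lt_card
    rw [Finset.ssubset_iff_of_subset]
    · exact ⟨k, by simpa using h, by simp⟩
    · intro l hl
      simp at hl ⊢
      exact h.trans hl
  have hiff : ∀ j k, v j < v k ↔ f k < f j := by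
    intro j k
    refine ⟨hf j k, fun h => ?_⟩
    rcases lt_trichotomy (v j) (v k) with h' | h' | h'
    · exact h'
    · rw [hv h'] at h; exact absurd h (lt_irrefl _)
    · exact absurd h (lt_asymm (hf k j h'))
  have hinj : Function.Injective f := by
    intro j k h
    apply hv
    rcases lt_trichotomy (v j) (v k) with h' | h' | h'
    · exact absurd h (hf j k h').ne'
    · exact h'
    · exact absurd h (hf k j h').ne
  exact ⟨Equiv.ofBijective f (Finite.injective_iff_bijective.1 hinj), hiff⟩

/-- every ordinal, neutral, anonymous and truthful mechanism on
tie-free profiles is a convex combination of the mechanisms `J^{1,q}_U`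
(`q ∈ {1,…,m}`) together with the `J^{2,q}_U` (`q ∈ {⌊n/2⌋+1,…,n+1}`). -/
theorem stmt5 (n m : ℕ) (hn : 1 ≤ n) (hm : 2 ≤ m)
    (J : (Fin n → Fin m → ℝ) → Fin m → ℝ)
    (hJ : MechU J) (hOrd : OrdinalMech J) (hN : Neutral J)
    (hA : AnonymousMech J) (hT : Truthful J) :
    ∃ w₁ w₂ : ℕ → ℝ, (∀ q, 0 ≤ w₁ q) ∧ (∀ q, 0 ≤ w₂ q) ∧
      ((∑ q ∈ Finset.Icc 1 m, w₁ q) +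
        (∑ q ∈ Finset.Icc (n/2 + 1) (n + 1), w₂ q) = 1) ∧
      ∀ u, IsProfileU u → ∀ j,
        J u j = (∑ q ∈ Finset.Icc 1 m, w₁ q * Jone q u j) +
          (∑ q ∈ Finset.Icc (n/2 + 1) (n + 1), w₂ q * Jtwo q u j) := by
  obtain ⟨N, rfl⟩ : ∃ N, n = N + 1 := ⟨n - 1, by omega⟩
  obtain ⟨M, rfl⟩ : ∃ M, m = M + 2 := ⟨m - 2, by omega⟩
  have hp := good_pJ hJ hOrd hN hA hT
  obtain ⟨a, b, ha, hb, hbs, hab⟩ := exists_ab hp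
  set R := pJ J (fun _ => 1) (Fin.last _) with hR
  have hR0 : 0 ≤ R := (hJ _ (fun i => ut_pref 1)).1 _
  have hmain : ∀ u, IsProfileU u → ∀ j,
      J u j = (∑ q ∈ Finset.Icc 1 (M + 2), wOne N M a q * Jone q u j) +
          (∑ q ∈ Finset.Icc ((N + 1)/2 + 1) (N + 1 + 1), wTwo N M b R q * Jtwo q u j) := by
    intro u hu j
    choose π hπ using fun i => exists_rkg (u i) (hu i).2
    have hJu : J u = pJ J π := by
      apply hOrd _ _ hu (fun l => ut_pref (π l))
      intro i j k
      rw [hπ, ut_lt]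
    rw [sum_Jone (wOne N M a) u π hπ j]
    have := sum_Jtwo (wTwo N M b R) u π hπ j
    rw [show N + 1 + 1 = N + 2 from rfl, this, hJu]
    exact p_eq_Mform hp hbs hab (FF_diff N M a) (GG_diff N M b R hbs) (FF_last N M a)
      (GG_zero N M b R) π j
  refine ⟨wOne N M a, wTwo N M b R, ?_, ?_, ?_, hmain⟩
  · intro q
    unfold wOne
    have := ha (q - 1)
    split_ifs <;> positivity
  · intro q
    unfold wTwo
    have := hb (q - 1)
    split_ifs <;> positivity
  · let u : Fin (N + 1) → Fin (M + 2) → ℝ := fun _ => ut 1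
    have hu : IsProfileU u := fun _ => ut_pref 1
    have hrep : OrdRep u (fun _ => (1 : Rkg M)) := fun i j k => ut_lt 1 j k
    have h1 := (hJ u hu).2
    rw [Finset.sum_congr rfl (fun j _ => hmain u hu j), Finset.sum_add_distrib,
      Finset.sum_comm, Finset.sum_comm (t := Finset.Icc ((N + 1)/2 + 1) (N + 1 + 1))] at h1
    rw [← h1]
    congr 1
    · apply Finset.sum_congr rfl
      intro q hq
      rw [mem_Icc] at hq
      rw [← Finset.mul_sum, total_Jone u _ hrep q hq.1 hq.2, mul_one]
    · apply Finset.sum_congr rfl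
      intro q hq
      rw [← Finset.mul_sum, total_Jtwo u q, mul_one]
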